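/- Let A be a compact subset of ℂ. Then A is at most countable if and only if acc^{ω₁} A = ∅, where ω₁ is the first uncountable ordinal. -/

import Mathlib

open Ordinal Set

/-- The `α`-th Cantor–Bendixson derivative of a set `A ⊆ ℂ`, defined by transfinite
recursion: `cbd A 0 = A`, `cbd A (β+1) = derivedSet (cbd A β)` (the set of accumulation
points of `cbd A β`), and `cbd A α = ⋂_{β < α} cbd A β` for limit ordinals `α`. -/
noncomputable def cbd (A : Set ℂ) (α : Ordinal) : Set ℂ :=
  Ordinal.limitRecOn α A (fun _ ih => derivedSet ih)
    (fun α _ ih => ⋂ (β : Set.Iio α), ih β.1 β.2)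

universe u

lemma cbd_zero' (A : Set ℂ) : cbd A (0 : Ordinal.{u}) = A := by
  simp [cbd]

lemma cbd_succ' (A : Set ℂ) (a : Ordinal.{u}) : cbd A (Order.succ a) = derivedSet (cbd A a) := by
  unfold cbd
  rw [Order.succ_eq_add_one, Ordinal.limitRecOn_add_one]

lemma cbd_limit' (A : Set ℂ) (a : Ordinal.{u}) (h : Order.IsSuccLimit a) :
    cbd A a = ⋂ (β : Set.Iio a), cbd A β.1 := by
  unfold cbd
  rw [Ordinal.limitRecOn_limit (h := h)]

lemma cbd_closed (A : Set ℂ) (hA : IsClosed A) (a : Ordinal.{u}) : IsClosed (cbd A a) := by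
  induction a using Ordinal.limitRecOn with
  | zero => rwa [cbd_zero']
  | add_one a ih =>
    rw [← Order.succ_eq_add_one, cbd_succ']
    exact isClosed_derivedSet _
  | limit a h ih =>
    rw [cbd_limit' A a h]
    exact isClosed_iInter fun b => ih b.1 b.2

lemma cbd_anti (A : Set ℂ) (hA : IsClosed A) (b : Ordinal.{u}) :
    ∀ a ≤ b, cbd A b ⊆ cbd A a := by
  induction b using Ordinal.limitRecOn with
  | zero => intro a h; rw [nonpos_iff_eq_zero.1 h]
  | add_one b ih =>
    intro a h
    rcases h.eq_or_lt with rfl | h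
    · exact Subset.rfl
    · refine Subset.trans ?_ (ih a (Order.lt_succ_iff.1 (by simpa using h)))
      rw [← Order.succ_eq_add_one, cbd_succ']
      exact (isClosed_iff_derivedSet_subset _).1 (cbd_closed A hA b)
  | limit b hb ih =>
    intro a h
    rcases h.eq_or_lt with rfl | h
    · exact Subset.rfl
    · rw [cbd_limit' A b hb]
      exact iInter_subset (fun β : Set.Iio b => cbd A β.1) ⟨a, h⟩

lemma perfect_subset_cbd (A D : Set ℂ) (hD : Perfect D) (h : D ⊆ A) (a : Ordinal.{u}) :
    D ⊆ cbd A a := by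
  induction a using Ordinal.limitRecOn with
  | zero => rwa [cbd_zero']
  | add_one a ih =>
    rw [← Order.succ_eq_add_one, cbd_succ']
    exact fun x hx => (hD.acc x hx).mono (Filter.principal_mono.2 ih)
  | limit a h ih =>
    rw [cbd_limit' A a h]
    exact subset_iInter fun b => ih b.1 b.2

lemma cbd_main (A : Set ℂ) (hA : IsCompact A) :
    A.Countable ↔ cbd A (ω₁ : Ordinal.{u}) = ∅ := by
  have hc := hA.isClosed
  have hlim := Cardinal.isSuccLimit_omega (1 : Ordinal.{u})
  constructor
  · intro hcount
    by_contra hne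
    rw [← Ne, ← nonempty_iff_ne_empty] at hne
    have : Countable A := hcount.to_subtype
    have key : ∀ y : A, ∃ b < (ω₁ : Ordinal.{u}), (y.1 ∈ cbd A b → y.1 ∈ cbd A (ω₁ : Ordinal.{u})) := by
      intro y
      by_contra! hy
      have h0 : (0 : Ordinal.{u}) < (ω₁ : Ordinal.{u}) := Ordinal.omega_pos 1
      refine (hy 0 h0).2 ?_
      rw [cbd_limit' A _ hlim]
      exact mem_iInter.2 fun b => (hy b.1 b.2).1
    choose f hf hf' using key
    have hs : iSup f < (ω₁ : Ordinal.{u}) := Ordinal.iSup_lt_omega_one hf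
    have heq : cbd A (iSup f) ⊆ cbd A (ω₁ : Ordinal.{u}) := by
      intro y hy
      have hyA : y ∈ A := by
        have := cbd_anti A hc _ 0 (zero_le) hy
        rwa [cbd_zero'] at this
      exact hf' ⟨y, hyA⟩ (cbd_anti A hc _ _ (Ordinal.le_iSup f ⟨y, hyA⟩) hy)
    have hperf : Perfect (cbd A (ω₁ : Ordinal.{u})) := by
      refine ⟨cbd_closed A hc _, fun x hx => ?_⟩
      have h1 := cbd_anti A hc _ _ (hlim.succ_lt hs).le hx
      rw [cbd_succ'] at h1
      exact AccPt.mono h1 (Filter.principal_mono.2 heq)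
    obtain ⟨g, hg, -, hinj⟩ := hperf.exists_nat_bool_injection hne
    have hsub : cbd A (ω₁ : Ordinal.{u}) ⊆ A := by
      have := cbd_anti A hc (ω₁ : Ordinal.{u}) 0 (zero_le)
      rwa [cbd_zero'] at this
    have hr : (range g).Countable := hcount.mono (hg.trans hsub)
    have h3 : Countable (ℕ → Bool) := by
      have := hr.to_subtype
      exact (Set.rangeFactorization_injective.2 hinj).countable
    have h4 := Cardinal.mk_le_aleph0_iff.2 h3
    simp only [Cardinal.mk_pi, Cardinal.mk_fintype, Fintype.card_bool, Cardinal.prod_const] at h4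
    simp at h4
    exact absurd h4 (not_le.2 Cardinal.aleph0_lt_continuum)
  · intro h
    by_contra hunc
    obtain ⟨D, hD, hne, hDA⟩ := exists_perfect_nonempty_of_isClosed_of_not_countable hc hunc
    obtain ⟨x, hx⟩ := hne
    have := perfect_subset_cbd A D hD hDA (ω₁ : Ordinal.{u}) hx
    simp [h] at this

/-- A compact subset of `ℂ` is at most countable iff its `ω₁`-th Cantor–Bendixson
derivative is empty. -/
theorem countable_iff_cbd_omega1_empty (A : Set ℂ) (hA : IsCompact A) :
    A.Countable ↔ cbd A ω₁ = ∅ := by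
  exact cbd_main A hA
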